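/- Fix η with 0 < η < 1/20. For every sufficiently large prime p, there exist primes p₁, p₂, p₃ with p^{1/5 + η} < p₁, p₂, p₃ ≤ 2·p^{1/5 + η} such that p₁·p₂ + p₃ is a quadratic non-residue modulo p. -/

import Mathlib

/-- An integer `x` is a quadratic non-residue modulo the prime `p`. -/
def IsQuadNonRes (p : ℕ) (x : ℤ) : Prop :=
  ¬ ((p : ℤ) ∣ x) ∧ ¬ ∃ y : ℤ, y ^ 2 ≡ x [ZMOD (p : ℤ)]

/-!
Suppose that `b₁ * b₂ + b₃` is a residue for all primes `b₁, b₂, b₃` in `B = (N, 2N]`, where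
`N = p ^ θ` with `θ > 1 / 5`. Then the quadratic character is constantly `1` on `A + B`, where
`A = B * B` has about `N ^ 2` elements up to `4 N ^ 2` because factorisation into primes is unique.

Karatsuba's argument turns this into a contradiction. For primes `m` of size `N ^ 2 / (4 T)` and
`t ≤ T`, translating the range of summation by `m t` changes the sum over `n` of
`(∑ b ∈ B, χ (n + b)) ^ 2` little, and dividing by `m` rewrites it in terms of the correlations
`∑ t ≤ T, χ (u + t) χ (v + t)` with `u = (n + b) / m` and `v = (n + b') / m`. Some `b` contributes
at least the average; for this `b`, distinct triples `(m, n, b')` with `b' ≠ b` give distinct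
pairs `(u, v)`, so a high moment of the correlations over all pairs bounds the sum. That moment is
controlled by the Weil bound for products of shifted quadratic characters, proved here by
Stepanov's method: an auxiliary polynomial vanishes to high order at every point where the
character takes a given value.
-/

section Stepanov
open Polynomial
open scoped Finset

section TwistedDerivative
variable {R : Type*} [CommRing R]

/-- The operator `r ↦ e F' r + F r'`, through which `d/dx` acts on the cofactor `r` of `F ^ e`:
`(F ^ e r)' = F ^ (e - 1) (e F' r + F r')`. The exponent `e` is an element of `R`, which lets it
be lowered repeatedly without truncation. -/
noncomputable def twistedDerivative (F : R[X]) (e : R) : R[X] →ₗ[R] R[X] :=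
  LinearMap.mulLeft R (C e * derivative F) + LinearMap.mulLeft R F ∘ₗ derivative

/-- The effect of `k` derivatives on the cofactor of `F ^ e`: the composition of the operators
`twistedDerivative F e`, `twistedDerivative F (e - 1)`, …, `twistedDerivative F (e - (k - 1))`. -/
noncomputable def iterTwistedDerivative (F : R[X]) (e : R) : ℕ → R[X] →ₗ[R] R[X]
  | 0 => LinearMap.id
  | k + 1 => twistedDerivative F (e - k) ∘ₗ iterTwistedDerivative F e k

lemma twistedDerivative_apply (F : R[X]) (e : R) (r : R[X]) :
    twistedDerivative F e r = C e * derivative F * r + F * derivative r := rfl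

lemma iterTwistedDerivative_succ (F : R[X]) (e : R) (k : ℕ) (r : R[X]) :
    iterTwistedDerivative F e (k + 1) r =
      twistedDerivative F (e - k) (iterTwistedDerivative F e k r) := rfl

lemma natDegree_twistedDerivative_le (F : R[X]) (e : R) (r : R[X]) :
    (twistedDerivative F e r).natDegree ≤ r.natDegree + F.natDegree := by
  rw [twistedDerivative_apply]
  have hF := natDegree_derivative_le F
  have hr := natDegree_derivative_le r
  have he := natDegree_C_mul_le e (derivative F)
  refine (natDegree_add_le _ _).trans (max_le ?_ ?_) <;>
  · refine natDegree_mul_le.trans ?_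
    lia

lemma natDegree_iterTwistedDerivative_le (F : R[X]) (e : R) (k : ℕ) (r : R[X]) :
    (iterTwistedDerivative F e k r).natDegree ≤ r.natDegree + k * F.natDegree := by
  induction k with
  | zero => simp [iterTwistedDerivative]
  | succ k ih =>
    rw [iterTwistedDerivative_succ, add_one_mul, ← add_assoc]
    exact (natDegree_twistedDerivative_le _ _ _).trans (Nat.add_le_add_right ih _)

lemma derivative_pow_succ_mul (F : R[X]) (n : ℕ) (r : R[X]) :
    derivative (F ^ (n + 1) * r) = F ^ n * twistedDerivative F (n + 1 : ℕ) r := by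
  simp only [twistedDerivative_apply, derivative_mul, derivative_pow_succ, Nat.cast_add,
    Nat.cast_one]
  ring

lemma iterate_derivative_pow_mul (F : R[X]) {n k : ℕ} (hk : k ≤ n) (r : R[X]) :
    derivative^[k] (F ^ n * r) = F ^ (n - k) * iterTwistedDerivative F n k r := by
  induction k with
  | zero => simp [iterTwistedDerivative]
  | succ k ih =>
    have hn : n - k = n - (k + 1) + 1 := by lia
    rw [Function.iterate_succ_apply', ih (by lia), hn, derivative_pow_succ_mul,
      iterTwistedDerivative_succ, ← hn, Nat.cast_sub (by lia)]

end TwistedDerivative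

section SumMulPow
variable {R : Type*} [CommRing R] {J : ℕ}

/-- The specialisation `∑ j, a j * Y ^ j` at `Y` of a polynomial in a second variable, given by
its coefficients `a j`. Stepanov's auxiliary polynomial has this shape with `Y = X ^ p`, which has
zero derivative and takes the same values as `X` on `ZMod p`. -/
noncomputable def sumMulPow (Y : R[X]) : (Fin J → R[X]) →ₗ[R] R[X] :=
  ∑ j : Fin J, LinearMap.mulRight R (Y ^ (j : ℕ)) ∘ₗ LinearMap.proj j

lemma sumMulPow_apply (Y : R[X]) (a : Fin J → R[X]) :
    sumMulPow Y a = ∑ j, a j * Y ^ (j : ℕ) := by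
  simp [sumMulPow]

lemma iterate_derivative_pow_mul_sumMulPow (F : R[X]) {Y : R[X]} (hY : derivative Y = 0)
    {n k : ℕ} (hk : k ≤ n) (a : Fin J → R[X]) :
    derivative^[k] (F ^ n * sumMulPow Y a) =
      F ^ (n - k) * sumMulPow Y fun j ↦ iterTwistedDerivative F n k (a j) := by
  have hconst (i : ℕ) (r : R[X]) : derivative^[k] (r * Y ^ i) = derivative^[k] r * Y ^ i := by
    induction k generalizing r with
    | zero => rfl
    | succ k ih =>
      rw [Function.iterate_succ_apply, Function.iterate_succ_apply, derivative_mul,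
        derivative_pow, hY, mul_zero, mul_zero, add_zero, ih (by lia)]
  simp only [sumMulPow_apply, Finset.mul_sum, iterate_derivative_sum, ← mul_assoc, hconst,
    iterate_derivative_pow_mul F hk]

lemma natDegree_sumMulPow_le {Y : R[X]} {a : Fin J → R[X]} {d : ℕ}
    (ha : ∀ j, (a j).natDegree ≤ d) :
    (sumMulPow Y a).natDegree ≤ d + J * Y.natDegree := by
  rw [sumMulPow_apply]
  refine natDegree_sum_le_of_forall_le _ _ fun j _ ↦ natDegree_mul_le.trans ?_
  exact Nat.add_le_add (ha j) (natDegree_pow_le.trans (Nat.mul_le_mul_right _ j.2.le))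

lemma exists_degree_sumMulPow_X_pow_eq {D n : ℕ} (hDn : D ≤ n) {a : Fin J → R[X]}
    (hdeg : ∀ j, (a j).degree < D) (ha : a ≠ 0) :
    ∃ j, a j ≠ 0 ∧
      (sumMulPow (X ^ n) a).degree = (((a j).natDegree + n * j : ℕ) : WithBot ℕ) := by
  obtain ⟨j₀, hj₀⟩ := Function.ne_iff.mp ha
  have hlt (j) (hj : a j ≠ 0) : (a j).natDegree < n :=
    ((natDegree_lt_iff_degree_lt hj).mpr (hdeg j)).trans_le hDn
  have hzero (j : Fin J) : a j * (X ^ n) ^ (j : ℕ) = 0 ↔ a j = 0 := by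
    rw [← pow_mul, (monic_X_pow _).mul_left_eq_zero_iff]
  have hterm (j) (hj : a j ≠ 0) :
      (a j * (X ^ n) ^ (j : ℕ)).degree = (((a j).natDegree + n * j : ℕ) : WithBot ℕ) := by
    have := Polynomial.nontrivial_iff.mp ⟨_, _, hj⟩
    rw [degree_eq_natDegree ((hzero j).not.mpr hj), ← pow_mul, natDegree_mul_X_pow _ hj]
  have hsum : (sumMulPow (X ^ n) a).degree =
      Finset.univ.sup fun j : Fin J ↦ (a j * (X ^ n) ^ (j : ℕ)).degree := by
    rw [sumMulPow_apply]
    refine degree_sum_eq_of_disjoint _ _ fun i hi j hj hij heq ↦ hij ?_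
    have hi' := (hzero i).not.mp hi.2
    have hj' := (hzero j).not.mp hj.2
    simp only [Function.comp_apply, hterm i hi', hterm j hj', Nat.cast_inj] at heq
    have hdiv := congrArg (· / n) heq
    have hn : 0 < n := (Nat.zero_le _).trans_lt (hlt i hi')
    simpa [Nat.add_mul_div_left _ _ hn, Nat.div_eq_of_lt (hlt _ _), hi', hj', Fin.ext_iff]
      using hdiv
  obtain ⟨j, -, hj⟩ := Finset.exists_mem_eq_sup Finset.univ ⟨j₀, Finset.mem_univ _⟩
    fun j : Fin J ↦ (a j * (X ^ n) ^ (j : ℕ)).degree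
  have haj : a j ≠ 0 := by
    intro h0
    have hle := Finset.le_sup (f := fun j : Fin J ↦ (a j * (X ^ n) ^ (j : ℕ)).degree)
      (Finset.mem_univ j₀)
    rw [hj, (hzero j).mpr h0, degree_zero, le_bot_iff, degree_eq_bot, hzero] at hle
    exact hj₀ hle
  exact ⟨j, haj, hsum.trans (hj.trans (hterm j haj))⟩

lemma sumMulPow_X_pow_ne_zero {D n : ℕ} (hDn : D ≤ n) {a : Fin J → R[X]}
    (hdeg : ∀ j, (a j).degree < D) (ha : a ≠ 0) : sumMulPow (X ^ n) a ≠ 0 := by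
  obtain ⟨j, -, hj⟩ := exists_degree_sumMulPow_X_pow_eq hDn hdeg ha
  exact fun h ↦ by simp [h, -Nat.cast_add] at hj

lemma natDegree_sumMulPow_X_pow_mod_lt {D n : ℕ} (hDn : D ≤ n) {a : Fin J → R[X]}
    (hdeg : ∀ j, (a j).degree < D) (ha : a ≠ 0) : (sumMulPow (X ^ n) a).natDegree % n < D := by
  obtain ⟨j, haj, hj⟩ := exists_degree_sumMulPow_X_pow_eq hDn hdeg ha
  have hlt : (a j).natDegree < D := (natDegree_lt_iff_degree_lt haj).mpr (hdeg j)
  rwa [natDegree_eq_of_degree_eq_some hj, Nat.add_mul_mod_self_left,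
    Nat.mod_eq_of_lt (hlt.trans_le hDn)]

end SumMulPow

lemma sumMulPow_add_pow_mul_sumMulPow_ne_zero {K : Type*} [Field K] {J m n q : ℕ}
    (hn : n = m + 2 * q) (hm : Odd m) {F : K[X]} (hF : F.natDegree = m) {a b : Fin J → K[X]}
    (ha : ∀ j, (a j).degree < q) (hb : ∀ j, (b j).degree < q) (hab : (a, b) ≠ 0) :
    sumMulPow (X ^ n) a + F ^ (n / 2) * sumMulPow (X ^ n) b ≠ 0 := by
  have hqn : q ≤ n := by lia
  by_cases hb0 : b = 0
  · subst hb0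
    have ha0 : a ≠ 0 := by rintro rfl; exact hab rfl
    simpa using sumMulPow_X_pow_ne_zero hqn ha ha0
  -- Modulo `n` the second summand has degree in `[q, 2q)`, the first one in `[0, q)`.
  have hB := sumMulPow_X_pow_ne_zero hqn hb hb0
  have hF0 : F ^ (n / 2) ≠ 0 := pow_ne_zero _ (by rintro rfl; exact hm.pos.ne hF)
  intro h
  have hA : sumMulPow (X ^ n) a = -(F ^ (n / 2) * sumMulPow (X ^ n) b) :=
    eq_neg_of_add_eq_zero_left h
  have ha0 : a ≠ 0 := by
    rintro rfl
    rw [map_zero, eq_comm, neg_eq_zero] at hA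
    exact mul_ne_zero hF0 hB hA
  have hAmod := natDegree_sumMulPow_X_pow_mod_lt hqn ha ha0
  have hBmod := natDegree_sumMulPow_X_pow_mod_lt hqn hb hb0
  rw [hA, natDegree_neg, natDegree_mul hF0 hB, natDegree_pow, hF] at hAmod
  obtain ⟨t, rfl⟩ := hm
  have hdeg : n / 2 * (2 * t + 1) = q + n * t := by
    rw [show n / 2 = t + q by lia, hn]; ring
  rw [hdeg, add_right_comm, Nat.add_mul_mod_self_left, Nat.add_mod,
    Nat.mod_eq_of_lt (by lia : q < n), Nat.mod_eq_of_lt (by lia)] at hAmod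
  lia

section Conditions
variable {K : Type*} [Field K] {J : ℕ}

/-- Stepanov's auxiliary polynomial `F ^ l (A(X, Y) + F ^ h B(X, Y))`, where `A` and `B` are given
by their coefficients as polynomials in the second variable. -/
noncomputable def stepanovPoly (F Y : K[X]) (l h : ℕ) (a b : Fin J → K[X]) : K[X] :=
  F ^ l * sumMulPow Y a + F ^ (l + h) * sumMulPow Y b

/-- The polynomial in `x` whose vanishing makes the `k`-th derivative of `stepanovPoly` vanish at
all `x` with `F(x) ^ h = c` and `Y(x) = x`, as a linear function of the coefficients of the
auxiliary polynomial. -/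
noncomputable def stepanovCond (F : K[X]) (c : K) (l h k : ℕ) :
    (Fin J → K[X]) × (Fin J → K[X]) →ₗ[K] K[X] :=
  (sumMulPow X ∘ₗ (iterTwistedDerivative F (l : K) k).compLeft (Fin J)).coprod
    (c • (sumMulPow X ∘ₗ (iterTwistedDerivative F ((l + h : ℕ) : K) k).compLeft (Fin J)))

lemma stepanovCond_apply (F : K[X]) (c : K) (l h k : ℕ) (a b : Fin J → K[X]) :
    stepanovCond F c l h k (a, b) =
      sumMulPow X (fun j ↦ iterTwistedDerivative F (l : K) k (a j)) +
        c • sumMulPow X (fun j ↦ iterTwistedDerivative F ((l + h : ℕ) : K) k (b j)) := rfl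

lemma natDegree_stepanovCond_le (F : K[X]) (c : K) (l h k : ℕ) {d : ℕ} {a b : Fin J → K[X]}
    (ha : ∀ j, (a j).natDegree ≤ d) (hb : ∀ j, (b j).natDegree ≤ d) :
    (stepanovCond F c l h k (a, b)).natDegree ≤ d + k * F.natDegree + J := by
  rw [stepanovCond_apply]
  have hdeg (e : K) {r : Fin J → K[X]} (hr : ∀ j, (r j).natDegree ≤ d) :
      (sumMulPow X fun j ↦ iterTwistedDerivative F e k (r j)).natDegree ≤
        d + k * F.natDegree + J := by
    have := natDegree_sumMulPow_le (Y := X) fun j ↦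
      (natDegree_iterTwistedDerivative_le F e k (r j)).trans (Nat.add_le_add_right (hr j) _)
    rwa [natDegree_X, mul_one] at this
  exact (natDegree_add_le _ _).trans
    (max_le (hdeg _ ha) ((natDegree_smul_le _ _).trans (hdeg _ hb)))

lemma exists_forall_stepanovCond_eq_zero (F : K[X]) (c : K) {l q : ℕ} (h : ℕ)
    (hdim : l * (q + l * F.natDegree + J + 1) < 2 * (J * q)) :
    ∃ a b : Fin J → K[X], (∀ j, (a j).degree < q) ∧ (∀ j, (b j).degree < q) ∧ (a, b) ≠ 0 ∧
      ∀ k < l, stepanovCond F c l h k (a, b) = 0 := by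
  set E := q + l * F.natDegree + J + 1
  let incl : (Fin J → degreeLT K q) →ₗ[K] Fin J → K[X] := (degreeLT K q).subtype.compLeft (Fin J)
  have hnat (v : Fin J → degreeLT K q) (j : Fin J) : (incl v j).natDegree ≤ q :=
    natDegree_le_of_degree_le (mem_degreeLT.mp (v j).2).le
  have hmem (k : Fin l) (v) :
      (stepanovCond F c l h k ∘ₗ incl.prodMap incl) v ∈ degreeLT K E := by
    have hle := natDegree_stepanovCond_le F c l h k (hnat v.1) (hnat v.2)
    have hk : k * F.natDegree ≤ l * F.natDegree := Nat.mul_le_mul_right _ k.2.le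
    refine mem_degreeLT.mpr (degree_le_natDegree.trans_lt (Nat.cast_lt.mpr (hle.trans_lt ?_)))
    lia
  let conditions := LinearMap.pi fun k : Fin l ↦ LinearMap.codRestrict _ _ (hmem k)
  have hfinrank (n : ℕ) : Module.finrank K (degreeLT K n) = n := by
    rw [Module.finrank_eq_card_basis (degreeLT.basis K n), Fintype.card_fin]
  obtain ⟨⟨v, w⟩, hker, hne⟩ := (Submodule.ne_bot_iff _).mp <|
    LinearMap.ker_ne_bot_of_finrank_lt (f := conditions) <| by
      simp only [Module.finrank_pi_fintype, Module.finrank_prod, hfinrank, Finset.sum_const,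
        Finset.card_univ, Fintype.card_fin, smul_eq_mul]
      lia
  refine ⟨incl v, incl w, fun j ↦ mem_degreeLT.mp (v j).2, fun j ↦ mem_degreeLT.mp (w j).2,
    fun h0 ↦ hne ?_, fun k hk ↦ congrArg Subtype.val (congrFun (LinearMap.mem_ker.mp hker) ⟨k, hk⟩)⟩
  simp only [Prod.mk_eq_zero, funext_iff] at h0 ⊢
  exact ⟨fun j ↦ Subtype.ext (h0.1 j), fun j ↦ Subtype.ext (h0.2 j)⟩

lemma eval_iterate_derivative_stepanovPoly (F : K[X]) {Y : K[X]} (hY : derivative Y = 0)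
    {l k : ℕ} (hk : k ≤ l) (h : ℕ) (a b : Fin J → K[X]) {c x : K} (hx : F.eval x ^ h = c)
    (hYx : Y.eval x = x) :
    (derivative^[k] (stepanovPoly F Y l h a b)).eval x =
      F.eval x ^ (l - k) * (stepanovCond F c l h k (a, b)).eval x := by
  have hsum (r : Fin J → K[X]) : (sumMulPow Y r).eval x = (sumMulPow X r).eval x := by
    simp only [sumMulPow_apply, eval_finsetSum, eval_mul, eval_pow, hYx, eval_X]
  rw [stepanovPoly, iterate_map_add, iterate_derivative_pow_mul_sumMulPow F hY hk,
    iterate_derivative_pow_mul_sumMulPow F hY (hk.trans le_self_add), stepanovCond_apply,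
    Nat.sub_add_comm hk, pow_add]
  simp only [eval_add, eval_mul, eval_pow, eval_smul, hsum, hx, smul_eq_mul]
  ring

lemma natDegree_stepanovPoly_le (F : K[X]) (l h n : ℕ) {d : ℕ} {a b : Fin J → K[X]}
    (ha : ∀ j, (a j).natDegree ≤ d) (hb : ∀ j, (b j).natDegree ≤ d) :
    (stepanovPoly F (X ^ n) l h a b).natDegree ≤ (l + h) * F.natDegree + (d + J * n) := by
  have hle (r : Fin J → K[X]) {e : ℕ} (he : e ≤ l + h) (hr : ∀ j, (r j).natDegree ≤ d) :
      (F ^ e * sumMulPow (X ^ n) r).natDegree ≤ (l + h) * F.natDegree + (d + J * n) := by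
    have hsum := natDegree_sumMulPow_le (Y := X ^ n) hr
    rw [natDegree_X_pow] at hsum
    exact natDegree_mul_le.trans
      (Nat.add_le_add (natDegree_pow_le.trans (Nat.mul_le_mul_right _ he)) hsum)
  exact (natDegree_add_le _ _).trans (max_le (hle a le_self_add ha) (hle b le_rfl hb))

end Conditions

lemma card_mul_le_natDegree_of_isRoot_iterate_derivative {p : ℕ} [Fact p.Prime] {R : (ZMod p)[X]}
    (hR : R ≠ 0) {l : ℕ} (hl : l ≤ p) (S : Finset (ZMod p))
    (hS : ∀ x ∈ S, ∀ k < l, (derivative^[k] R).IsRoot x) : #S * l ≤ R.natDegree := by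
  classical
  have hmult : ∀ x ∈ S, l ≤ R.roots.count x := by
    intro x hx
    rw [count_roots]
    obtain _ | l := l
    · exact Nat.zero_le _
    refine lt_rootMultiplicity_of_isRoot_iterate_derivative_of_mem_nonZeroDivisors' hR
      (fun k hk ↦ hS x hx k (by lia)) fun k hk hk0 ↦ ?_
    rw [mem_nonZeroDivisors_iff_ne_zero, Ne, ZMod.natCast_eq_zero_iff]
    exact Nat.not_dvd_of_pos_of_lt (by lia) (by lia)
  calc #S * l ≤ ∑ x ∈ S, R.roots.count x := by
        simpa using Finset.card_nsmul_le_sum S _ _ hmult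
    _ ≤ ∑ x, R.roots.count x := Finset.sum_le_sum_of_subset (Finset.subset_univ _)
    _ = R.roots.card := Multiset.sum_count_eq_card fun _ _ ↦ Finset.mem_univ _
    _ ≤ R.natDegree := card_roots' R

section PowerValues
variable {p : ℕ} [Fact p.Prime] {F : (ZMod p)[X]}

lemma card_eval_pow_eq_mul_le {q J l : ℕ} (hp : p = F.natDegree + 2 * q) (hm : Odd F.natDegree)
    (c : ZMod p) (hl : l ≤ p) (hdim : l * (q + l * F.natDegree + J + 1) < 2 * (J * q)) :
    #{x | F.eval x ^ (p / 2) = c} * l ≤ (l + p / 2) * F.natDegree + (q + J * p) := by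
  obtain ⟨a, b, ha, hb, hab, hcond⟩ := exists_forall_stepanovCond_eq_zero F c (p / 2) hdim
  have hF0 : F ≠ 0 := by rintro rfl; exact hm.pos.ne rfl
  have hP0 : stepanovPoly F (X ^ p) l (p / 2) a b ≠ 0 := by
    rw [stepanovPoly, pow_add, mul_assoc, ← mul_add]
    exact mul_ne_zero (pow_ne_zero _ hF0)
      (sumMulPow_add_pow_mul_sumMulPow_ne_zero hp hm rfl ha hb hab)
  refine (card_mul_le_natDegree_of_isRoot_iterate_derivative hP0 hl _ fun x hx k hk ↦ ?_).trans
    (natDegree_stepanovPoly_le F l (p / 2) p (fun j ↦ natDegree_le_of_degree_le (ha j).le)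
      fun j ↦ natDegree_le_of_degree_le (hb j).le)
  rw [IsRoot, eval_iterate_derivative_stepanovPoly F (by simp [derivative_X_pow]) hk.le _ a b
    (Finset.mem_filter.mp hx).2 (by simp [ZMod.pow_card]), hcond k hk, eval_zero, mul_zero]

lemma two_mul_card_eval_pow_eq_le (hm : Odd F.natDegree) (hmp : (2 * F.natDegree + 6) ^ 2 ≤ p)
    (c : ZMod p) :
    2 * #{x | F.eval x ^ (p / 2) = c} ≤ p + p.sqrt * (3 * F.natDegree + 9) := by
  set m := F.natDegree with hmF
  set l := p.sqrt
  have hlp : l * l ≤ p := Nat.sqrt_le p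
  have hpl : p ≤ l * l + 2 * l := by have := Nat.sqrt_le_add p; lia
  have hml : 2 * m + 6 ≤ l := Nat.le_sqrt'.mpr hmp
  have hmp' : m ≤ p := by nlinarith
  obtain ⟨q, hq⟩ : ∃ q, p = m + 2 * q := by
    have hp : Odd p := (Fact.out : p.Prime).odd_of_ne_two (by nlinarith)
    obtain ⟨q, hq⟩ := (Nat.even_sub hmp').mpr (iff_of_false (by simpa) (by simpa))
    exact ⟨q, by lia⟩
  set J := l / 2 + m + 2
  have hJl : l + 2 * m + 3 ≤ 2 * J := by lia
  have hJu : 2 * J ≤ l + 2 * m + 4 := by lia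
  have hdim : l * (q + l * m + J + 1) < 2 * (J * q) := by
    have hlower := Nat.mul_le_mul_right q hJl
    have hupper := Nat.mul_le_mul_left l hJu
    have hml' := Nat.mul_le_mul_left l hml
    have hlp' := Nat.mul_le_mul_right (2 * m + 2) hlp
    nlinarith
  have hcount := card_eval_pow_eq_mul_le hq hm c (by nlinarith) hdim
  refine Nat.le_of_mul_le_mul_right (c := l) ?_ (by lia)
  have hhalf : 2 * (p / 2) * m ≤ p * m := Nat.mul_le_mul_right _ (by lia)
  have hJp := Nat.mul_le_mul_right p hJu
  have hpl' := Nat.mul_le_mul_right (3 * m + 5) hpl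
  have hml' := Nat.mul_le_mul_left l hml
  rw [← hmF] at hcount
  nlinarith

end PowerValues

section QuadraticCharacterSum

lemma quadraticChar_mul_add_one {K : Type*} [Field K] [Fintype K] [DecidableEq K]
    (hK : ringChar K ≠ 2) (ε : ℤˣ) (y : K) :
    ε * quadraticChar K y + 1 =
      2 * (if y ^ (Fintype.card K / 2) = ((ε : ℤ) : K) then 1 else 0) + if y = 0 then 1 else 0 := by
  have hne : (-1 : K) ≠ 1 := Ring.neg_one_ne_one_of_char_ne_two hK
  rw [← quadraticChar_eq_pow_of_char_ne_two' hK y]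
  rcases eq_or_ne y 0 with rfl | hy
  · obtain rfl | rfl := Int.units_eq_one_or ε <;> simp
  · obtain h | h := quadraticChar_dichotomy hy <;> obtain rfl | rfl := Int.units_eq_one_or ε <;>
      simp [h, hy, hne, hne.symm]

lemma abs_sum_quadraticChar_eval_le {p : ℕ} [Fact p.Prime] {F : (ZMod p)[X]}
    (hm : Odd F.natDegree) (hmp : (2 * F.natDegree + 6) ^ 2 ≤ p) :
    |∑ x, quadraticChar (ZMod p) (F.eval x)| ≤ p.sqrt * (3 * F.natDegree + 10) := by
  have hchar : ringChar (ZMod p) ≠ 2 := by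
    rw [ZMod.ringChar_zmod_n]
    have := Nat.pow_le_pow_left (Nat.le_add_left 6 (2 * F.natDegree)) 2
    lia
  have hzeros : #{x | F.eval x = 0} ≤ p.sqrt := by
    have hF0 : F ≠ 0 := by rintro rfl; exact hm.pos.ne rfl
    refine (card_le_degree_of_subset_roots (p := F) fun x hx ↦ ?_).trans
      (Nat.le_sqrt'.mpr ((Nat.pow_le_pow_left (by lia) 2).trans hmp))
    simpa [hF0] using hx
  have hsigned (ε : ℤˣ) :
      ε * ∑ x, quadraticChar (ZMod p) (F.eval x) ≤ p.sqrt * (3 * F.natDegree + 10) := by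
    have hcount := two_mul_card_eval_pow_eq_le hm hmp ((ε : ℤ) : ZMod p)
    have hsum := Finset.sum_congr (rfl : (Finset.univ : Finset (ZMod p)) = _)
      fun x _ ↦ quadraticChar_mul_add_one hchar ε (F.eval x)
    simp only [Finset.sum_add_distrib, ← Finset.mul_sum, Finset.sum_boole, ZMod.card,
      Finset.sum_const, Finset.card_univ, nsmul_eq_mul, mul_one] at hsum
    zify at hcount hzeros
    linarith
  have hpos := hsigned 1
  have hneg := hsigned (-1)
  rw [abs_le]
  simp only [Units.val_one, Units.val_neg] at hpos hneg
  lia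

end QuadraticCharacterSum

end Stepanov

section ShiftedProducts
open Polynomial
open scoped Finset

variable {K : Type*} [Field K] {ι : Type*} [Fintype ι]

lemma natDegree_prod_C_mul_X_add_one [DecidableEq K] (s : ι → K) :
    (∏ i, (C (s i) * X + 1) : K[X]).natDegree = #{i | s i ≠ 0} := by
  have hne (i : ι) : (C (s i) * X + 1 : K[X]) ≠ 0 := fun h ↦ by
    simpa using congrArg (eval 0) h
  rw [natDegree_prod _ _ fun i _ ↦ hne i, Finset.card_filter]
  refine Finset.sum_congr rfl fun i _ ↦ ?_
  split_ifs with h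
  · rw [← C_1, natDegree_linear h]
  · simp [not_not.mp h]

variable [Fintype K] [DecidableEq K]

-- The substitution `x = y⁻¹ - t i₀` turns one of the linear factors into a square.
lemma sum_prod_quadraticChar_add_eq (hι : Even (Fintype.card ι)) (t : ι → K) (i₀ : ι) :
    ∑ x, ∏ i, quadraticChar K (x + t i) =
      ∑ y, quadraticChar K ((∏ i, (C (t i - t i₀) * X + 1)).eval y) - 1 := by
  have hsubst : ∑ x, ∏ i, quadraticChar K (x + t i) =
      ∑ y : K, ∏ i, quadraticChar K (y⁻¹ - t i₀ + t i) :=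
    (Equiv.sum_comp ((Equiv.inv K).trans (Equiv.subRight (t i₀)))
      fun x ↦ ∏ i, quadraticChar K (x + t i)).symm
  have hone : (1 : ℤ) = ∑ y : K, if y = 0 then 1 else 0 := by simp
  rw [hsubst, hone, ← Finset.sum_sub_distrib]
  refine Finset.sum_congr rfl fun y _ ↦ ?_
  rw [eval_prod, map_prod]
  simp only [eval_add, eval_mul, eval_C, eval_X, eval_one]
  split_ifs with hy
  · subst hy
    rw [Finset.prod_eq_zero (Finset.mem_univ i₀) (by simp)]
    simp
  · have hfactor (i : ι) : quadraticChar K (y⁻¹ - t i₀ + t i) =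
        quadraticChar K y⁻¹ * quadraticChar K ((t i - t i₀) * y + 1) := by
      rw [← map_mul]
      congr 1
      field_simp
      ring
    obtain ⟨k, hk⟩ := hι
    simp only [hfactor, Finset.prod_mul_distrib, Finset.prod_const, Finset.card_univ, hk,
      ← two_mul, pow_mul, quadraticChar_sq_one (inv_ne_zero hy), one_pow, one_mul, sub_zero]

lemma sq_sum_prod_quadraticChar_add_le {p : ℕ} [Fact p.Prime] (hι : Even (Fintype.card ι))
    (hp : (2 * Fintype.card ι + 4) ^ 2 ≤ p) {t : ι → ZMod p} {t₀ : ZMod p}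
    (ht₀ : Odd #{i | t i = t₀}) :
    (∑ x, ∏ i, quadraticChar (ZMod p) (x + t i)) ^ 2 ≤ (3 * Fintype.card ι + 8) ^ 2 * (p : ℤ) := by
  obtain ⟨i₀, hi₀⟩ := Finset.card_pos.mp ht₀.pos
  obtain rfl : t i₀ = t₀ := (Finset.mem_filter.mp hi₀).2
  rw [sum_prod_quadraticChar_add_eq hι t i₀]
  set F : (ZMod p)[X] := ∏ i, (C (t i - t i₀) * X + 1) with hF
  set S := ∑ y, quadraticChar (ZMod p) (F.eval y) with hS
  have hdeg : #{i | t i = t i₀} + F.natDegree = Fintype.card ι := by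
    simp only [hF, natDegree_prod_C_mul_X_add_one, ne_eq, sub_eq_zero]
    exact Finset.card_filter_add_card_filter_not _
  have hodd : Odd F.natDegree := by
    rw [← hdeg, Nat.even_add'] at hι
    exact hι.mp ht₀
  have hlt : F.natDegree + 1 ≤ Fintype.card ι := by have := ht₀.pos; lia
  have hWeil := abs_sum_quadraticChar_eval_le hodd ((Nat.pow_le_pow_left (by lia) 2).trans hp)
  rw [← hS] at hWeil
  have hsqrt : (1 : ℤ) ≤ p.sqrt := by
    exact_mod_cast Nat.sqrt_pos.mpr (Fact.out : p.Prime).pos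
  have hbound : |S - 1| ≤ p.sqrt * (3 * Fintype.card ι + 8) := by
    have htri : |S - 1| ≤ |S| + 1 := abs_sub S 1
    zify at hlt
    nlinarith
  calc (S - 1) ^ 2 = |S - 1| ^ 2 := (sq_abs _).symm
    _ ≤ (p.sqrt * (3 * Fintype.card ι + 8)) ^ 2 := by gcongr
    _ = (3 * Fintype.card ι + 8) ^ 2 * (p.sqrt ^ 2 : ℕ) := by push_cast; ring
    _ ≤ (3 * Fintype.card ι + 8) ^ 2 * (p : ℤ) := by gcongr; exact Nat.sqrt_le' p

end ShiftedProducts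

section EvenFibres
open scoped Finset

lemma card_piFinset_filter_even_fibre_le {ι α : Type*} [Fintype ι] [Nonempty ι] [DecidableEq ι]
    [DecidableEq α] (D : Finset α) {k : ℕ} (hk : Fintype.card ι ≤ 2 * k) :
    #{t ∈ Fintype.piFinset fun _ : ι ↦ D | ∀ v ∈ D, Even #{i | t i = v}} ≤
      k ^ Fintype.card ι * #D ^ k := by
  -- Such a tuple has at most `k` values, so it factors through `Fin k`.
  calc _ ≤ #(((Finset.univ : Finset (ι → Fin k)) ×ˢ Fintype.piFinset fun _ : Fin k ↦ D).image
        fun fu i ↦ fu.2 (fu.1 i)) := Finset.card_le_card fun t ht ↦ ?_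
    _ ≤ #((Finset.univ : Finset (ι → Fin k)) ×ˢ Fintype.piFinset fun _ : Fin k ↦ D) :=
      Finset.card_image_le
    _ = k ^ Fintype.card ι * #D ^ k := by simp
  obtain ⟨htD, heven⟩ := Finset.mem_filter.mp ht
  rw [Fintype.mem_piFinset] at htD
  have hvalues : 2 * #(Finset.univ.image t) ≤ 2 * k := by
    refine (Finset.mul_card_image_le_card _ _ fun v hv ↦ ?_).trans hk
    obtain ⟨i, -, rfl⟩ := Finset.mem_image.mp hv
    exact Nat.le_of_dvd (Finset.card_pos.mpr ⟨i, by simp⟩) (heven _ (htD i)).two_dvd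
  obtain ⟨e⟩ : Nonempty (Finset.univ.image t ↪ Fin k) :=
    Function.Embedding.nonempty_of_card_le (by simpa using hvalues)
  let value (i : ι) : Finset.univ.image t := ⟨t i, Finset.mem_image_of_mem _ (Finset.mem_univ i)⟩
  have : Nonempty (Finset.univ.image t) := Nonempty.map value inferInstance
  refine Finset.mem_image.mpr ⟨(e ∘ value,
    fun j ↦ ((Function.invFun e j : Finset.univ.image t) : α)), ?_, ?_⟩
  · simp only [Finset.mem_product, Finset.mem_univ, true_and, Fintype.mem_piFinset]
    intro j
    obtain ⟨i, -, hi⟩ := Finset.mem_image.mp (Function.invFun e j).2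
    exact hi ▸ htD i
  · funext i
    simp [Function.leftInverse_invFun e.injective _, value]

end EvenFibres

section Moments
open scoped Finset

variable {K : Type*} [Field K] [Fintype K] [DecidableEq K]

lemma abs_quadraticChar_le_one (x : K) : |quadraticChar K x| ≤ 1 := by
  rcases eq_or_ne x 0 with rfl | hx
  · simp
  · obtain h | h := quadraticChar_dichotomy hx <;> simp [h]

/-- The correlation over the set of shifts `D` of the quadratic character at `x` and at `y`. -/
def shiftCorr (D : Finset K) (x y : K) : ℤ :=
  ∑ t ∈ D, quadraticChar K (x + t) * quadraticChar K (y + t)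

lemma sum_shiftCorr_pow (D : Finset K) (n : ℕ) :
    ∑ z : K × K, shiftCorr D z.1 z.2 ^ n =
      ∑ t ∈ Fintype.piFinset fun _ : Fin n ↦ D, (∑ x, ∏ i, quadraticChar K (x + t i)) ^ 2 := by
  have hpow (z : K × K) : shiftCorr D z.1 z.2 ^ n = ∑ t ∈ Fintype.piFinset fun _ : Fin n ↦ D,
      (∏ i, quadraticChar K (z.1 + t i)) * ∏ i, quadraticChar K (z.2 + t i) := by
    simp only [shiftCorr, Finset.sum_pow', Finset.prod_mul_distrib]
  rw [Finset.sum_congr rfl fun z _ ↦ hpow z, Finset.sum_comm]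
  refine Finset.sum_congr rfl fun t _ ↦ ?_
  rw [sq, Finset.sum_mul_sum, Fintype.sum_prod_type]

lemma sq_sum_prod_quadraticChar_le_sq_card {ι : Type*} [Fintype ι] (t : ι → K) :
    (∑ x, ∏ i, quadraticChar K (x + t i)) ^ 2 ≤ (Fintype.card K : ℤ) ^ 2 := by
  rw [sq_le_sq, Nat.abs_cast]
  have hprod (x : K) : |∏ i, quadraticChar K (x + t i)| ≤ 1 := by
    rw [Finset.abs_prod]
    exact Finset.prod_le_one (fun _ _ ↦ abs_nonneg _) fun _ _ ↦ abs_quadraticChar_le_one _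
  calc |∑ x, ∏ i, quadraticChar K (x + t i)|
      ≤ ∑ x, |∏ i, quadraticChar K (x + t i)| := Finset.abs_sum_le_sum_abs _ _
    _ ≤ #(Finset.univ : Finset K) • (1 : ℤ) := Finset.sum_le_card_nsmul _ _ _ fun x _ ↦ hprod x
    _ = Fintype.card K := by simp

lemma sum_shiftCorr_pow_le {p : ℕ} [Fact p.Prime] {k : ℕ} (hk : k ≠ 0)
    (hp : (4 * k + 4) ^ 2 ≤ p) (D : Finset (ZMod p)) :
    ∑ z : ZMod p × ZMod p, shiftCorr D z.1 z.2 ^ (2 * k) ≤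
      (k : ℤ) ^ (2 * k) * #D ^ k * p ^ 2 + #D ^ (2 * k) * ((6 * k + 8) ^ 2 * p) := by
  have : NeZero (2 * k) := ⟨by lia⟩
  rw [sum_shiftCorr_pow, ← Finset.sum_filter_add_sum_filter_not _
    fun t ↦ ∀ v ∈ D, Even #{i | t i = v}]
  refine add_le_add ?_ ?_
  · refine (Finset.sum_le_card_nsmul _ _ _ fun t _ ↦
      sq_sum_prod_quadraticChar_le_sq_card t).trans ?_
    have hcard := card_piFinset_filter_even_fibre_le (ι := Fin (2 * k)) (k := k) D (by simp)
    rw [Fintype.card_fin] at hcard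
    rw [nsmul_eq_mul, ZMod.card]
    gcongr
    exact_mod_cast (by convert hcard)
  · refine (Finset.sum_le_card_nsmul _ _ ((6 * k + 8) ^ 2 * (p : ℤ)) fun t ht ↦ ?_).trans ?_
    · have hodd := (Finset.mem_filter.mp ht).2
      push Not at hodd
      obtain ⟨v, -, hv⟩ := hodd
      have hshift := sq_sum_prod_quadraticChar_add_le (t := t) (by simp)
        (by rw [Fintype.card_fin]; lia) (Nat.not_even_iff_odd.mp hv)
      rw [Fintype.card_fin] at hshift
      push_cast at hshift
      linarith
    · rw [nsmul_eq_mul]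
      gcongr
      have hcard := Finset.card_filter_le (Fintype.piFinset fun _ : Fin (2 * k) ↦ D)
        fun t ↦ ¬∀ v ∈ D, Even #{i | t i = v}
      rw [Fintype.card_piFinset_const] at hcard
      exact_mod_cast hcard

end Moments

section Shifting
open scoped Finset

section Field
variable {F : Type*} [Field F] [Fintype F] [DecidableEq F]

/-- The square of the sum of the quadratic character over the translate of `B` by `y`. -/
def shiftSumSq (B : Finset ℕ) (y : F) : ℤ := (∑ b ∈ B, quadraticChar F (y + b)) ^ 2

lemma shiftSumSq_nonneg (B : Finset ℕ) (y : F) : 0 ≤ shiftSumSq B y := sq_nonneg _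

lemma sum_shiftSumSq_add_mul (B : Finset ℕ) (D : Finset F) {m : F} (hm : m ≠ 0) (y : F) :
    ∑ t ∈ D, shiftSumSq B (y + m * t) =
      ∑ b ∈ B, ∑ b' ∈ B, shiftCorr D ((y + b) / m) ((y + b') / m) := by
  have hdilate (c : ℕ) (t : F) : quadraticChar F (y + m * t + c) =
      quadraticChar F m * quadraticChar F ((y + c) / m + t) := by
    rw [← map_mul]
    congr 1
    field_simp
    ring
  simp only [shiftSumSq, shiftCorr, sq, Finset.sum_mul_sum]
  rw [Finset.sum_comm]
  refine Finset.sum_congr rfl fun b _ ↦ ?_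
  rw [Finset.sum_comm]
  refine Finset.sum_congr rfl fun b' _ ↦ Finset.sum_congr rfl fun t _ ↦ ?_
  rw [hdilate, hdilate, mul_mul_mul_comm, ← sq, quadraticChar_sq_one hm, one_mul]

lemma card_mul_sq_card_le_sum_shiftSumSq {A B : Finset ℕ} {X s : ℕ} (hA : A ⊆ Finset.Ioc 0 X)
    (hs : s ≤ X) (hχ : ∀ a ∈ A, ∀ b ∈ B, quadraticChar F (a + b) = 1) :
    (#A * #B ^ 2 : ℤ) ≤ ∑ n ∈ Finset.Ioc (-X : ℤ) X, shiftSumSq B (n + s : F) := by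
  have hmem (a : ℕ) (ha : a ∈ A) : (a - s : ℤ) ∈ Finset.Ioc (-X : ℤ) X := by
    have := Finset.mem_Ioc.mp (hA ha)
    rw [Finset.mem_Ioc]
    lia
  have hconst (a : ℕ) (ha : a ∈ A) : shiftSumSq B (a : F) = #B ^ 2 := by
    rw [shiftSumSq, Finset.sum_congr rfl (hχ a ha)]
    simp
  calc (#A * #B ^ 2 : ℤ) = ∑ a ∈ A, shiftSumSq B (a : F) := by
        rw [Finset.sum_congr rfl hconst, Finset.sum_const, nsmul_eq_mul]
    _ = ∑ n ∈ A.image (fun a : ℕ ↦ (a - s : ℤ)), shiftSumSq B (n + s : F) := by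
        rw [Finset.sum_image fun a _ a' _ h ↦ by simpa using h]
        simp
    _ ≤ ∑ n ∈ Finset.Ioc (-X : ℤ) X, shiftSumSq B (n + s : F) :=
        Finset.sum_le_sum_of_subset_of_nonneg (Finset.image_subset_iff.mpr hmem)
          fun _ _ _ ↦ shiftSumSq_nonneg _ _

/-- The pair `((n + b) / m, (n + b') / m)` attached to the triple `x = (m, n, b')`. -/
def quotPair (b : ℕ) (x : ℕ × ℤ × ℕ) : F × F :=
  ((x.2.1 + b) / x.1, (x.2.1 + x.2.2) / x.1)

lemma abs_shiftCorr_le_card (D : Finset F) (x y : F) : |shiftCorr D x y| ≤ #D := by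
  refine (Finset.abs_sum_le_sum_abs _ _).trans ?_
  simpa using Finset.sum_le_card_nsmul D _ 1 fun t _ ↦ (abs_mul _ _).trans_le
    (mul_le_one₀ (abs_quadraticChar_le_one (x + t)) (abs_nonneg _)
      (abs_quadraticChar_le_one (y + t)))

lemma sum_shiftCorr_quotPair_le (D : Finset F) (Ms B : Finset ℕ) (I : Finset ℤ) {b : ℕ}
    (hb : b ∈ B) :
    ∑ x ∈ Ms ×ˢ I ×ˢ B, shiftCorr D (quotPair b x).1 (quotPair b x).2 ≤
      #Ms * #I * #D +
        ∑ x ∈ Ms ×ˢ I ×ˢ B.erase b, |shiftCorr D (quotPair b x).1 (quotPair b x).2| := by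
  have hsplit : Ms ×ˢ I ×ˢ B = Ms ×ˢ I ×ˢ {b} ∪ Ms ×ˢ I ×ˢ B.erase b := by
    rw [← Finset.product_union, ← Finset.product_union, ← Finset.insert_eq, Finset.insert_erase hb]
  have hle (x : ℕ × ℤ × ℕ) := le_abs_self (shiftCorr D (quotPair b x).1 (quotPair b x).2)
  calc _ ≤ ∑ x ∈ Ms ×ˢ I ×ˢ B, |shiftCorr D (quotPair b x).1 (quotPair b x).2| :=
        Finset.sum_le_sum fun x _ ↦ hle x
    _ ≤ ∑ x ∈ Ms ×ˢ I ×ˢ {b}, |shiftCorr D (quotPair b x).1 (quotPair b x).2| + _ := by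
        rw [hsplit]
        exact (Finset.sum_union <| Finset.disjoint_product.mpr <| .inr <|
          Finset.disjoint_product.mpr <| .inr <| by simp).le
    _ ≤ #Ms * #I * #D + _ := by
        gcongr
        simpa using Finset.sum_le_card_nsmul (Ms ×ˢ I ×ˢ {b}) _ _
          fun x _ ↦ abs_shiftCorr_le_card D (quotPair b x).1 (quotPair b x).2

end Field

lemma eq_of_abs_sub_lt_of_intCast_eq {p : ℕ} {a b : ℤ} (h : |a - b| < p)
    (hab : (a : ZMod p) = b) : a = b :=
  sub_eq_zero.mp <| Int.eq_zero_of_abs_lt_dvd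
    ((ZMod.intCast_eq_intCast_iff_dvd_sub b a p).mp hab.symm) h

lemma prime_eq_of_mul_eq_mul {m m' : ℕ} (hm : m.Prime) (hm' : m'.Prime) {d d' : ℤ} (hd : d ≠ 0)
    (hdm : |d| < m) (h : d * m' = d' * m) : m = m' := by
  have hdvd : (m : ℤ) ∣ d * m' := ⟨d', by rw [h, mul_comm]⟩
  rcases (Nat.prime_iff_prime_int.mp hm).dvd_or_dvd hdvd with hmd | hmm'
  · exact absurd (Int.eq_zero_of_abs_lt_dvd hmd hdm) hd
  · exact (Nat.prime_dvd_prime_iff_eq hm hm').mp (by exact_mod_cast hmm')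

/-- The residue classes modulo `p` of the integers `1, …, T`. -/
def initialClasses (p T : ℕ) : Finset (ZMod p) := (Finset.Icc 1 T).image (↑)

lemma injOn_cast_Icc {p T : ℕ} (hT : T < p) :
    Set.InjOn ((↑) : ℕ → ZMod p) (Finset.Icc 1 T) := fun a ha b hb h ↦ by
  simp only [Finset.coe_Icc, Set.mem_Icc] at ha hb
  exact Nat.ModEq.eq_of_lt_of_lt ((ZMod.natCast_eq_natCast_iff a b p).mp h) (by lia) (by lia)

lemma card_initialClasses {p T : ℕ} (hT : T < p) : #(initialClasses p T) = T := by
  rw [initialClasses, Finset.card_image_of_injOn (injOn_cast_Icc hT), Nat.card_Icc,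
    Nat.add_sub_cancel]

lemma natCast_ne_zero_of_mul_lt {p H M : ℕ} (hHM : 2 * (H * M) < p) {b m : ℕ}
    (hb : b ∈ Finset.Ioc 0 H) (hm : 0 < m) (hmM : m ≤ M) : (m : ZMod p) ≠ 0 := by
  rw [Ne, ZMod.natCast_eq_zero_iff]
  refine Nat.not_dvd_of_pos_of_lt hm ?_
  have hH : 0 < H := (Finset.mem_Ioc.mp hb).1.trans_le (Finset.mem_Ioc.mp hb).2
  nlinarith

variable {p : ℕ} [Fact p.Prime] {A B Ms : Finset ℕ} {H M T X : ℕ}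

lemma mul_card_le_sum_shiftCorr_quotPair (hA : A ⊆ Finset.Ioc 0 X)
    (hMs₀ : ∀ m ∈ Ms, (m : ZMod p) ≠ 0) (hMT : ∀ m ∈ Ms, m * T ≤ X) (hT : T < p)
    (hχ : ∀ a ∈ A, ∀ b ∈ B, quadraticChar (ZMod p) (a + b) = 1) :
    (#B * (#Ms * T * #A * #B) : ℤ) ≤
      ∑ b ∈ B, ∑ x ∈ Ms ×ˢ Finset.Ioc (-X : ℤ) X ×ˢ B,
        shiftCorr (initialClasses p T) (quotPair b x).1 (quotPair b x).2 := by
  have hm (m : ℕ) (hm : m ∈ Ms) : (T * (#A * #B ^ 2) : ℤ) ≤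
      ∑ b ∈ B, ∑ n ∈ Finset.Ioc (-X : ℤ) X, ∑ b' ∈ B,
        shiftCorr (initialClasses p T) ((n + b) / m) ((n + b') / m) := by
    calc (T * (#A * #B ^ 2) : ℤ) = ∑ _t ∈ Finset.Icc 1 T, (#A * #B ^ 2 : ℤ) := by simp
      _ ≤ ∑ t ∈ Finset.Icc 1 T, ∑ n ∈ Finset.Ioc (-X : ℤ) X,
          shiftSumSq B (n + (m * t : ℕ) : ZMod p) := Finset.sum_le_sum fun t ht ↦
        card_mul_sq_card_le_sum_shiftSumSq hA
          ((Nat.mul_le_mul_left m (Finset.mem_Icc.mp ht).2).trans (hMT m hm)) hχ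
      _ = ∑ n ∈ Finset.Ioc (-X : ℤ) X, ∑ t ∈ initialClasses p T,
          shiftSumSq B (n + m * t : ZMod p) := by
        rw [Finset.sum_comm]
        simp only [initialClasses, Finset.sum_image (injOn_cast_Icc hT), Nat.cast_mul]
      _ = _ := by
        rw [Finset.sum_congr rfl fun n _ ↦ sum_shiftSumSq_add_mul B _ (hMs₀ m hm) _,
          Finset.sum_comm]
  calc (#B * (#Ms * T * #A * #B) : ℤ) = ∑ _m ∈ Ms, (T * (#A * #B ^ 2) : ℤ) := by
        rw [Finset.sum_const, nsmul_eq_mul]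
        ring
    _ ≤ _ := Finset.sum_le_sum hm
    _ = _ := by
        rw [Finset.sum_comm]
        simp only [Finset.sum_product, quotPair]

lemma quotPair_injOn (hB : B ⊆ Finset.Ioc 0 H) (hMs : ∀ m ∈ Ms, m.Prime ∧ H < m ∧ m ≤ M)
    (hHM : 2 * (H * M) < p) (hX : 2 * X < p) {b : ℕ} (hb : b ∈ B) :
    Set.InjOn (quotPair b : ℕ × ℤ × ℕ → ZMod p × ZMod p)
      (Ms ×ˢ Finset.Ioc (-X : ℤ) X ×ˢ B.erase b : Finset (ℕ × ℤ × ℕ)) := by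
  rintro ⟨m, n, c⟩ h ⟨m', n', c'⟩ h' heq
  simp only [Finset.coe_product, Set.mem_prod, Finset.mem_coe, Finset.mem_erase] at h h'
  obtain ⟨hm, hn, hcb, hc⟩ := h
  obtain ⟨hm', hn', -, hc'⟩ := h'
  obtain ⟨hmprime, hHm, hmM⟩ := hMs m hm
  obtain ⟨hmprime', -, hmM'⟩ := hMs m' hm'
  rw [Finset.mem_Ioc] at hn hn'
  have hm₀ := natCast_ne_zero_of_mul_lt hHM (hB hb) hmprime.pos hmM
  have hm₀' := natCast_ne_zero_of_mul_lt hHM (hB hb) hmprime'.pos hmM'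
  simp only [quotPair, Prod.mk.injEq, div_eq_div_iff hm₀ hm₀'] at heq
  obtain ⟨hfst, hsnd⟩ := heq
  have hsub {d : ℕ} (hd : d ∈ B) : |(d - b : ℤ)| ≤ H := by
    have := Finset.mem_Ioc.mp (hB hd)
    have := Finset.mem_Ioc.mp (hB hb)
    rw [abs_le]
    lia
  have hprod {d e : ℕ} (hd : d ∈ B) (he : e ≤ M) : |(d - b : ℤ) * e| ≤ H * M := by
    rw [abs_mul, Nat.abs_cast]
    have := hsub hd
    gcongr
  have hcross : (c - b : ℤ) * m' = (c' - b) * m := by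
    refine eq_of_abs_sub_lt_of_intCast_eq (p := p) ?_ ?_
    · have := abs_sub ((c - b : ℤ) * m') ((c' - b) * m)
      have := hprod hc hmM'
      have := hprod hc' hmM
      zify at hHM
      linarith
    · push_cast
      linear_combination hsnd - hfst
  obtain rfl : m = m' := prime_eq_of_mul_eq_mul hmprime hmprime'
    (sub_ne_zero.mpr (by exact_mod_cast hcb)) ((hsub hc).trans_lt (by exact_mod_cast hHm)) hcross
  have hc_eq : (c : ℤ) = c' :=
    sub_left_injective (mul_right_cancel₀ (by exact_mod_cast hmprime.ne_zero) hcross)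
  have hn_eq : n = n' := eq_of_abs_sub_lt_of_intCast_eq (p := p) (by rw [abs_lt]; lia)
    (add_right_cancel (mul_right_cancel₀ hm₀ hfst))
  simp [hn_eq, Nat.cast_injective hc_eq]

lemma exists_mul_card_le_sum_abs_shiftCorr (hA : A ⊆ Finset.Ioc 0 X) (hB : B ⊆ Finset.Ioc 0 H)
    (hBne : B.Nonempty) (hMs : ∀ m ∈ Ms, m.Prime ∧ H < m ∧ m ≤ M) (hMT : M * T ≤ X) (hT : T < p)
    (hHM : 2 * (H * M) < p) (hX : 2 * X < p) (hAB : 4 * X ≤ #A * #B)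
    (hχ : ∀ a ∈ A, ∀ b ∈ B, quadraticChar (ZMod p) (a + b) = 1) :
    ∃ S : Finset (ZMod p × ZMod p), #S ≤ 2 * X * #Ms * #B ∧
      (#Ms * T * #A * #B : ℤ) ≤ 2 * ∑ z ∈ S, |shiftCorr (initialClasses p T) z.1 z.2| := by
  have hcard : #(Finset.Ioc (-X : ℤ) X) = 2 * X := by rw [Int.card_Ioc]; lia
  obtain ⟨b, hb, hsum⟩ : ∃ b ∈ B, (#Ms * T * #A * #B : ℤ) ≤
      ∑ x ∈ Ms ×ˢ Finset.Ioc (-X : ℤ) X ×ˢ B,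
        shiftCorr (initialClasses p T) (quotPair b x).1 (quotPair b x).2 := by
    refine Finset.exists_le_of_sum_le hBne ?_
    rw [Finset.sum_const, nsmul_eq_mul]
    exact mul_card_le_sum_shiftCorr_quotPair hA
      (fun m hm ↦ natCast_ne_zero_of_mul_lt hHM (hB hBne.choose_spec) (hMs m hm).1.pos
        (hMs m hm).2.2)
      (fun m hm ↦ (Nat.mul_le_mul_right T (hMs m hm).2.2).trans hMT) hT hχ
  refine ⟨(Ms ×ˢ Finset.Ioc (-X : ℤ) X ×ˢ B.erase b).image (quotPair b), ?_, ?_⟩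
  · refine Finset.card_image_le.trans ?_
    rw [Finset.card_product, Finset.card_product, hcard]
    calc _ ≤ #Ms * (2 * X * #B) := by gcongr; exact Finset.erase_subset b B
      _ = _ := by ring
  · rw [Finset.sum_image (quotPair_injOn hB hMs hHM hX hb)]
    have hdiag := sum_shiftCorr_quotPair_le (initialClasses p T) Ms B (Finset.Ioc (-X : ℤ) X) hb
    rw [card_initialClasses hT, hcard, Nat.cast_mul, Nat.cast_two] at hdiag
    zify at hAB
    have hsmall := mul_le_mul_of_nonneg_right hAB (by positivity : (0 : ℤ) ≤ #Ms * T)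
    linarith

lemma sum_abs_shiftCorr_pow_le {k : ℕ} (hk : k ≠ 0) (hkp : (4 * k + 4) ^ 2 ≤ p) (hT : T < p)
    (hpT : p ≤ T ^ k) (S : Finset (ZMod p × ZMod p)) :
    ∑ z ∈ S, |shiftCorr (initialClasses p T) z.1 z.2| ^ (2 * k) ≤
      (T : ℤ) ^ (2 * k) * ((k ^ (2 * k) + (6 * k + 8) ^ 2) * p) := by
  simp only [(even_two_mul k).pow_abs]
  calc ∑ z ∈ S, shiftCorr (initialClasses p T) z.1 z.2 ^ (2 * k)
      ≤ ∑ z : ZMod p × ZMod p, shiftCorr (initialClasses p T) z.1 z.2 ^ (2 * k) :=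
        Finset.sum_le_sum_of_subset_of_nonneg (Finset.subset_univ S)
          fun _ _ _ ↦ (even_two_mul k).pow_nonneg _
    _ ≤ (k : ℤ) ^ (2 * k) * T ^ k * p ^ 2 + T ^ (2 * k) * ((6 * k + 8) ^ 2 * p) := by
        simpa only [card_initialClasses hT] using
          sum_shiftCorr_pow_le hk hkp (initialClasses p T)
    _ = (k : ℤ) ^ (2 * k) * T ^ k * p * p + T ^ (2 * k) * ((6 * k + 8) ^ 2 * p) := by ring
    _ ≤ (k : ℤ) ^ (2 * k) * T ^ k * (T ^ k : ℕ) * p + T ^ (2 * k) * ((6 * k + 8) ^ 2 * p) := by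
        gcongr
    _ = _ := by push_cast; ring

lemma mul_card_pow_le_of_quadraticChar_add_eq_one {k : ℕ} (hk : k ≠ 0)
    (hkp : (4 * k + 4) ^ 2 ≤ p) (hA : A ⊆ Finset.Ioc 0 X) (hB : B ⊆ Finset.Ioc 0 H)
    (hBne : B.Nonempty) (hMs : ∀ m ∈ Ms, m.Prime ∧ H < m ∧ m ≤ M) (hMsne : Ms.Nonempty)
    (hMT : M * T ≤ X) (hT : T < p) (hpT : p ≤ T ^ k) (hHM : 2 * (H * M) < p) (hX : 2 * X < p)
    (hAB : 4 * X ≤ #A * #B) (hχ : ∀ a ∈ A, ∀ b ∈ B, quadraticChar (ZMod p) (a + b) = 1) :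
    X * (#Ms * #B * #A ^ (2 * k)) ≤ (4 * X) ^ (2 * k) * ((k ^ (2 * k) + (6 * k + 8) ^ 2) * p) := by
  obtain ⟨S, hScard, hS⟩ :=
    exists_mul_card_le_sum_abs_shiftCorr hA hB hBne hMs hMT hT hHM hX hAB hχ
  have hTpos : 0 < T := Nat.pos_of_ne_zero fun h ↦ by
    simp [h, hk, (Fact.out : p.Prime).ne_zero] at hpT
  have hpos : (0 : ℤ) < (T * (#Ms * #B)) ^ (2 * k) := by
    have := hBne.card_pos
    have := hMsne.card_pos
    positivity
  obtain ⟨j, hj⟩ : ∃ j, 2 * k = j + 1 := Nat.exists_eq_succ_of_ne_zero (by lia)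
  have hholder : (∑ z ∈ S, |shiftCorr (initialClasses p T) z.1 z.2|) ^ (2 * k) ≤
      (2 * X * #Ms * #B : ℕ) ^ j *
        ((T : ℤ) ^ (2 * k) * ((k ^ (2 * k) + (6 * k + 8) ^ 2) * p)) := by
    calc _ ≤ (#S : ℤ) ^ j * ∑ z ∈ S, |shiftCorr (initialClasses p T) z.1 z.2| ^ (2 * k) := by
          rw [hj]
          exact pow_sum_le_card_mul_sum_pow (fun _ _ ↦ abs_nonneg _) j
      _ ≤ _ := by
          gcongr
          exact sum_abs_shiftCorr_pow_le hk hkp hT hpT S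
  zify
  refine le_of_mul_le_mul_left ?_ hpos
  calc ((T * (#Ms * #B)) ^ (2 * k) * (X * (#Ms * #B * #A ^ (2 * k))) : ℤ)
      = X * #Ms * #B * (#Ms * T * #A * #B) ^ (2 * k) := by ring
    _ ≤ 2 * (X * #Ms * #B) *
        (2 * ∑ z ∈ S, |shiftCorr (initialClasses p T) z.1 z.2|) ^ (2 * k) := by
        gcongr ?_ * ?_ ^ (2 * k)
        exact le_mul_of_one_le_left (by positivity) one_le_two
    _ ≤ 2 * (X * #Ms * #B) * (2 ^ (2 * k) * ((2 * X * #Ms * #B : ℕ) ^ j *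
        ((T : ℤ) ^ (2 * k) * ((k ^ (2 * k) + (6 * k + 8) ^ 2) * p)))) := by
        rw [mul_pow (2 : ℤ)]
        gcongr
    _ = 2 ^ (2 * k) * (2 * X * #Ms * #B) ^ (j + 1) *
        ((T : ℤ) ^ (2 * k) * ((k ^ (2 * k) + (6 * k + 8) ^ 2) * p)) := by push_cast; ring
    _ = _ := by
        rw [← hj, show (4 : ℤ) * X = 2 * (2 * X) by ring]
        simp only [mul_pow]
        ring

end Shifting

section PrimeCounting
open Chebyshev Filter Real
open scoped Finset Pointwise

lemma sq_card_le_two_mul_card_mul_self {B : Finset ℕ} (hB : ∀ b ∈ B, b.Prime) :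
    #B ^ 2 ≤ 2 * #(B * B) := by
  rw [sq, ← Finset.card_product, ← Finset.image_mul_product]
  refine Finset.card_le_mul_card_image _ _ fun n hn ↦ ?_
  obtain ⟨⟨a, b⟩, hab, rfl⟩ := Finset.mem_image.mp hn
  obtain ⟨ha, hb⟩ := Finset.mem_product.mp hab
  refine (Finset.card_le_card (t := {(a, b), (b, a)}) ?_).trans Finset.card_le_two
  rintro ⟨c, d⟩ hcd
  simp only [Finset.mem_filter, Finset.mem_product] at hcd
  obtain ⟨⟨hc, -⟩, heq⟩ := hcd
  simp only [Finset.mem_insert, Finset.mem_singleton, Prod.mk.injEq]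
  rcases (hB c hc).dvd_mul.mp ⟨d, heq.symm⟩ with hca | hcb
  · obtain rfl := (Nat.prime_dvd_prime_iff_eq (hB c hc) (hB a ha)).mp hca
    exact .inl ⟨rfl, Nat.eq_of_mul_eq_mul_left (hB c hc).pos heq⟩
  · obtain rfl := (Nat.prime_dvd_prime_iff_eq (hB c hc) (hB b hb)).mp hcb
    exact .inr ⟨rfl, Nat.eq_of_mul_eq_mul_left (hB c hc).pos (heq.trans (mul_comm a c))⟩

/-- The set of primes in the dyadic interval `(n, 2n]`. -/
def dyadicPrimes (n : ℕ) : Finset ℕ := {q ∈ Finset.Ioc n (2 * n) | q.Prime}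

lemma mem_dyadicPrimes {n q : ℕ} : q ∈ dyadicPrimes n ↔ (n < q ∧ q ≤ 2 * n) ∧ q.Prime := by
  rw [dyadicPrimes, Finset.mem_filter, Finset.mem_Ioc]

lemma log_centralBinom_eq_sum (n : ℕ) : log n.centralBinom =
    ∑ q ∈ Nat.primesLE (2 * n), n.centralBinom.factorization q * log q := by
  conv_lhs => rw [← Nat.prod_pow_factorization_centralBinom]
  have hsub : Nat.primesLE (2 * n) ⊆ Finset.range (2 * n + 1) := Finset.filter_subset _ _
  rw [← Finset.prod_subset hsub fun q hq hq' ↦ ?_, Nat.cast_prod, log_prod fun q hq ↦ ?_]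
  · simp
  · exact_mod_cast pow_ne_zero _ (Nat.prime_of_mem_primesLE hq).ne_zero
  · rw [Nat.factorization_eq_zero_of_not_prime _ fun hprime ↦
      hq' (Nat.mem_primesLE.mpr ⟨Finset.mem_range_succ_iff.mp hq, hprime⟩), pow_zero]

lemma factorization_centralBinom_add_one_le {n q : ℕ} (hn : 2 < n) (hq : q ∈ Nat.primesLE (2 * n)) :
    n.centralBinom.factorization q + 1 ≤
      q.log (2 * n) + ((if q ≤ 2 * n / 3 then 1 else 0) + if n < q then 1 else 0) := by
  obtain ⟨hqn, hprime⟩ := Nat.mem_primesLE.mp hq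
  have hle : n.centralBinom.factorization q ≤ q.log (2 * n) := Nat.factorization_choose_le_log
  have hlog : 0 < q.log (2 * n) := Nat.log_pos hprime.one_lt hqn
  by_cases hsmall : q ≤ 2 * n / 3
  · simp only [hsmall, if_true]
    lia
  by_cases hlarge : n < q
  · simp only [hlarge, if_true]
    lia
  · rw [Nat.factorization_centralBinom_of_two_mul_self_lt_three_mul hn (by lia) (by lia)]
    lia

lemma log_centralBinom_le {n : ℕ} (hn : 2 < n) : log n.centralBinom ≤
    ψ (2 * n : ℕ) - θ (2 * n : ℕ) + θ (2 * n / 3 : ℕ) + #(dyadicPrimes n) * log (2 * n) := by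
  have hsum : ∑ q ∈ Nat.primesLE (2 * n), (n.centralBinom.factorization q + 1) * log q ≤
      ∑ q ∈ Nat.primesLE (2 * n), (q.log (2 * n) * log q +
        ((if q ≤ 2 * n / 3 then log q else 0) + if n < q then log q else 0)) := by
    refine Finset.sum_le_sum fun q hq ↦ ?_
    have hcast := (Nat.cast_le (α := ℝ)).mpr (factorization_centralBinom_add_one_le hn hq)
    push_cast at hcast
    refine (mul_le_mul_of_nonneg_right hcast (log_natCast_nonneg q)).trans_eq ?_
    simp only [add_mul, ite_mul, one_mul, zero_mul]
  have hsmall : {q ∈ Nat.primesLE (2 * n) | q ≤ 2 * n / 3} = Nat.primesLE (2 * n / 3) := by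
    ext q
    simp only [Finset.mem_filter, Nat.mem_primesLE]
    lia
  have hlarge : {q ∈ Nat.primesLE (2 * n) | n < q} = dyadicPrimes n := by
    ext q
    simp only [Finset.mem_filter, Nat.mem_primesLE, mem_dyadicPrimes]
    tauto
  have hdyadic : ∑ q ∈ dyadicPrimes n, log q ≤ #(dyadicPrimes n) * log (2 * n) := by
    rw [← nsmul_eq_mul]
    refine Finset.sum_le_card_nsmul _ _ _ fun q hq ↦ ?_
    obtain ⟨⟨-, hqn⟩, hprime⟩ := mem_dyadicPrimes.mp hq
    exact log_le_log (by exact_mod_cast hprime.pos) (by exact_mod_cast hqn)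
  simp only [Finset.sum_add_distrib, add_mul, one_mul, ← Finset.sum_filter, hsmall, hlarge,
    ← log_centralBinom_eq_sum, ← psi_eq_sum_mul_log_prime, ← theta_eq_sum_primesLE_log] at hsum
  linarith

lemma mul_log_four_le_card_dyadicPrimes {n : ℕ} (hn : 4 ≤ n) :
    n / 3 * log 4 ≤ (#(dyadicPrimes n) + 2 * √(2 * n) + 1) * log (2 * n) := by
  have hn₀ : (4 : ℝ) ≤ n := mod_cast hn
  have hfour : n * log 4 ≤ log n + log n.centralBinom := by
    rw [← log_pow, ← log_mul (by positivity) (by exact_mod_cast n.centralBinom_ne_zero)]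
    exact log_le_log (by positivity) (by exact_mod_cast (n.four_pow_lt_mul_centralBinom hn).le)
  have hlog : log n ≤ log (2 * n) := log_le_log (by positivity) (by linarith)
  have hpsi := psi_sub_theta_le (x := (2 * n : ℕ)) (by push_cast; linarith)
  have htheta : θ (2 * n / 3 : ℕ) ≤ log 4 * (2 * n / 3) := by
    refine (theta_le_log4_mul_x (Nat.cast_nonneg _)).trans ?_
    gcongr
    exact_mod_cast Nat.cast_div_le (α := ℝ) (m := 2 * n) (n := 3)
  have hbinom := log_centralBinom_le (by lia : 2 < n)
  push_cast at hpsi hbinom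
  linarith

lemma eventually_rpow_le_card_dyadicPrimes {ε : ℝ} (hε : 0 < ε) (hε' : ε ≤ 1 / 2) :
    ∀ᶠ x : ℝ in atTop, x ^ (1 - ε) ≤ #(dyadicPrimes ⌊x⌋₊) := by
  filter_upwards [(isLittleO_log_rpow_atTop hε).bound (show (0 : ℝ) < 1 / 60 by norm_num),
    eventually_ge_atTop 8] with x hlog hx
  have hlogx : 0 < log x := log_pos (by linarith)
  rw [norm_of_nonneg hlogx.le, norm_of_nonneg (by positivity)] at hlog
  have hfloor : (⌊x⌋₊ : ℝ) ≤ x := Nat.floor_le (by linarith)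
  have hfloor' : x < ⌊x⌋₊ + 1 := Nat.lt_floor_add_one x
  have hcount := mul_log_four_le_card_dyadicPrimes (Nat.le_floor (by linarith : ↑4 ≤ x))
  have hlog4 : (1 : ℝ) ≤ log 4 := by
    rw [show (4 : ℝ) = 2 ^ 2 by norm_num, log_pow]
    norm_num
    linarith [log_two_gt_d9]
  have hlog2 : log (2 * ⌊x⌋₊) ≤ 2 * log x := by
    rw [← log_rpow (by linarith), rpow_two]
    exact log_le_log (by linarith) (by nlinarith)
  have hsqrt : √(2 * ⌊x⌋₊) ≤ 3 / 2 * x ^ (1 - ε) := by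
    calc √(2 * ⌊x⌋₊) ≤ √((3 / 2) ^ 2 * x) := sqrt_le_sqrt (by linarith)
      _ = 3 / 2 * x ^ (1 / 2 : ℝ) := by
        rw [sqrt_mul (by positivity), sqrt_sq (by norm_num), sqrt_eq_rpow]
      _ ≤ 3 / 2 * x ^ (1 - ε) := by
        gcongr 3 / 2 * ?_
        exact rpow_le_rpow_of_exponent_le (by linarith) (by linarith)
  have hone : 1 ≤ x ^ (1 - ε) := one_le_rpow (by linarith) (by linarith)
  by_contra! hlt
  have hupper : (#(dyadicPrimes ⌊x⌋₊) + 2 * √(2 * ⌊x⌋₊) + 1) * log (2 * ⌊x⌋₊) ≤ x / 6 := by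
    calc _ ≤ (5 * x ^ (1 - ε)) * (2 * (1 / 60 * x ^ ε)) := by
          gcongr
          · exact log_nonneg (by linarith)
          · linarith
          · linarith
      _ = x / 6 := by
        rw [show 5 * x ^ (1 - ε) * (2 * (1 / 60 * x ^ ε)) = x ^ (1 - ε) * x ^ ε / 6 by ring,
          ← rpow_add (by linarith), sub_add_cancel, rpow_one]
  nlinarith

end PrimeCounting

section Dyadic
open Filter
open scoped Finset Pointwise

lemma isQuadNonRes_iff_not_isSquare {p : ℕ} {x : ℤ} :
    IsQuadNonRes p x ↔ ¬IsSquare (x : ZMod p) := by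
  have hsq : (∃ y : ℤ, y ^ 2 ≡ x [ZMOD p]) ↔ IsSquare (x : ZMod p) := by
    simp only [isSquare_iff_exists_sq, ZMod.intCast_surjective.exists,
      ← ZMod.intCast_eq_intCast_iff, Int.cast_pow, eq_comm]
  rw [IsQuadNonRes, hsq, and_iff_right_iff_imp]
  rintro hx hdvd
  exact hx (by simp [(ZMod.intCast_zmod_eq_zero_iff_dvd x p).mpr hdvd])

lemma quadraticChar_eq_one_of_not_isQuadNonRes {p : ℕ} [Fact p.Prime] {x : ℕ} (hx : x ≠ 0)
    (hxp : x < p) (h : ¬IsQuadNonRes p x) : quadraticChar (ZMod p) x = 1 := by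
  rw [isQuadNonRes_iff_not_isSquare, not_not, Int.cast_natCast] at h
  refine (quadraticChar_one_iff_isSquare ?_).mpr h
  rw [Ne, ZMod.natCast_eq_zero_iff]
  exact Nat.not_dvd_of_pos_of_lt (Nat.pos_of_ne_zero hx) hxp

lemma sq_mul_card_dyadicPrimes_pow_le {p : ℕ} [Fact p.Prime] {k n r T : ℕ} (hk : k ≠ 0)
    (hkp : (4 * k + 4) ^ 2 ≤ p) (hn : n ≠ 0) (hnr : 2 * n ≤ r) (hrT : r * T ≤ 2 * n ^ 2)
    (hpT : p ≤ T ^ k) (hp : 8 * (n * r) < p) (hr : (dyadicPrimes r).Nonempty)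
    (hcard : 32 * n ^ 2 ≤ #(dyadicPrimes n) ^ 3)
    (hres : ∀ b₁ ∈ dyadicPrimes n, ∀ b₂ ∈ dyadicPrimes n, ∀ b₃ ∈ dyadicPrimes n,
      ¬IsQuadNonRes p (b₁ * b₂ + b₃)) :
    n ^ 2 * (#(dyadicPrimes r) * #(dyadicPrimes n) ^ (4 * k + 1)) ≤
      (32 * n ^ 2) ^ (2 * k) * ((k ^ (2 * k) + (6 * k + 8) ^ 2) * p) := by
  set B := dyadicPrimes n
  have hB : B ⊆ Finset.Ioc 0 (2 * n) := fun b hb ↦ by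
    have := (mem_dyadicPrimes.mp hb).1
    rw [Finset.mem_Ioc]
    lia
  have hA : B * B ⊆ Finset.Ioc 0 (4 * n ^ 2) := fun a ha ↦ by
    obtain ⟨b₁, hb₁, b₂, hb₂, rfl⟩ := Finset.mem_mul.mp ha
    have h₁ := Finset.mem_Ioc.mp (hB hb₁)
    have h₂ := Finset.mem_Ioc.mp (hB hb₂)
    rw [Finset.mem_Ioc]
    exact ⟨Nat.mul_pos h₁.1 h₂.1, by nlinarith⟩
  have hA_card : #B ^ 2 ≤ 2 * #(B * B) :=
    sq_card_le_two_mul_card_mul_self fun b hb ↦ (mem_dyadicPrimes.mp hb).2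
  have hn₂ : 0 < n ^ 2 := by positivity
  have hnr₂ : 2 * n ^ 2 ≤ n * r := by nlinarith
  have hχ : ∀ a ∈ B * B, ∀ b ∈ B, quadraticChar (ZMod p) (a + b) = 1 := fun a ha b hb ↦ by
    obtain ⟨b₁, hb₁, b₂, hb₂, rfl⟩ := Finset.mem_mul.mp ha
    have h := hres b₁ hb₁ b₂ hb₂ b hb
    have haX := Finset.mem_Ioc.mp (hA ha)
    have hbH := Finset.mem_Ioc.mp (hB hb)
    exact_mod_cast quadraticChar_eq_one_of_not_isQuadNonRes (x := b₁ * b₂ + b) (by lia)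
      (by nlinarith) (by exact_mod_cast h)
  have hmain := mul_card_pow_le_of_quadraticChar_add_eq_one (Ms := dyadicPrimes r) (M := 2 * r)
    hk hkp hA hB (Finset.card_pos.mp (Nat.pos_of_ne_zero fun h ↦ by simp [h, hn] at hcard))
    (fun m hm ↦ by have := mem_dyadicPrimes.mp hm; exact ⟨this.2, by lia, by lia⟩) hr
    (by lia) (by nlinarith) hpT (by nlinarith) (by lia) (by nlinarith) hχ
  calc n ^ 2 * (#(dyadicPrimes r) * #B ^ (4 * k + 1))
      = n ^ 2 * (#(dyadicPrimes r) * #B * (#B ^ 2) ^ (2 * k)) := by ring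
    _ ≤ 4 * n ^ 2 * (#(dyadicPrimes r) * #B * (2 * #(B * B)) ^ (2 * k)) := by gcongr; lia
    _ = 2 ^ (2 * k) * (4 * n ^ 2 * (#(dyadicPrimes r) * #B * #(B * B) ^ (2 * k))) := by ring
    _ ≤ 2 ^ (2 * k) * ((4 * (4 * n ^ 2)) ^ (2 * k) *
        ((k ^ (2 * k) + (6 * k + 8) ^ 2) * p)) := by gcongr
    _ = _ := by
      rw [← mul_assoc, ← mul_pow]
      ring

lemma mul_pow_le_mul_rpow {N y K L ε : ℝ} {m : ℕ} (hN : 1 ≤ N) (hy : 0 < y) (hyN : y ≤ N ^ 2)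
    (hε : 0 ≤ ε) (hK : y ^ (1 - ε) ≤ K) (hL : N ^ (1 - ε) ≤ L) :
    y * N ^ m ≤ K * L ^ m * N ^ ((m + 2) * ε) := by
  have hN₀ : 0 < N := by linarith
  have hK₀ : 0 ≤ K := (by positivity : (0 : ℝ) ≤ y ^ (1 - ε)).trans hK
  have hyK : y ≤ K * (N ^ ε) ^ 2 := by
    calc y = y ^ (1 - ε) * y ^ ε := by rw [← Real.rpow_add hy, sub_add_cancel, Real.rpow_one]
      _ ≤ K * (N ^ 2) ^ ε := by gcongr
      _ = K * (N ^ ε) ^ 2 := by rw [Real.rpow_pow_comm hN₀.le]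
  have hNL : N ≤ L * N ^ ε := by
    calc N = N ^ (1 - ε) * N ^ ε := by rw [← Real.rpow_add hN₀, sub_add_cancel, Real.rpow_one]
      _ ≤ L * N ^ ε := by gcongr
  calc y * N ^ m ≤ K * (N ^ ε) ^ 2 * (L * N ^ ε) ^ m := by gcongr
    _ = K * L ^ m * (N ^ ε) ^ (m + 2) := by ring
    _ = K * L ^ m * N ^ ((m + 2) * ε) := by
      rw [← Real.rpow_mul_natCast hN₀.le, mul_comm ε]
      push_cast
      rfl

-- The scales are `N = t s` and `T = ⌈t⌉`, so that `t s ^ 2 / 4` is the size `N ^ 2 / (4 T)` of the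
-- dilating primes `m`.
lemma mul_sq_mul_card_dyadicPrimes_pow_le {p k : ℕ} [Fact p.Prime] {s t : ℝ} (hk : k ≠ 0)
    (hkp : (4 * k + 4) ^ 2 ≤ p) (hps : p = t ^ 2 * s ^ 5) (hpt : p ≤ t ^ k) (hs : 8 ≤ s)
    (ht : 1 ≤ t) (hne : (dyadicPrimes ⌊t * s ^ 2 / 4⌋₊).Nonempty)
    (hcard : 32 * (t * s) ^ 2 ≤ (#(dyadicPrimes ⌊t * s⌋₊) : ℝ) ^ 3)
    (hres : ∀ b₁ ∈ dyadicPrimes ⌊t * s⌋₊, ∀ b₂ ∈ dyadicPrimes ⌊t * s⌋₊,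
      ∀ b₃ ∈ dyadicPrimes ⌊t * s⌋₊, ¬IsQuadNonRes p (b₁ * b₂ + b₃)) :
    (t * s) ^ 2 * (#(dyadicPrimes ⌊t * s ^ 2 / 4⌋₊) * #(dyadicPrimes ⌊t * s⌋₊) ^ (4 * k + 1)) ≤
      4 * ((32 * (t * s) ^ 2) ^ (2 * k) * ((k ^ (2 * k) + (6 * k + 8) ^ 2) * p)) := by
  have hN : 8 ≤ t * s := by nlinarith
  set n := ⌊t * s⌋₊
  set r := ⌊t * s ^ 2 / 4⌋₊
  have hnN : (n : ℝ) ≤ t * s := Nat.floor_le (by linarith)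
  have hNn : t * s ≤ 2 * n := by linarith [Nat.lt_floor_add_one (t * s)]
  have hry : (r : ℝ) ≤ t * s ^ 2 / 4 := Nat.floor_le (by positivity)
  have hT : (⌈t⌉₊ : ℝ) ≤ 2 * t := by linarith [Nat.ceil_lt_add_one (by linarith : 0 ≤ t)]
  have hn₀ : n ≠ 0 := (Nat.floor_pos.mpr (by linarith)).ne'
  have hnr : 2 * n ≤ r := Nat.le_floor (by push_cast; nlinarith)
  have hrT : (r * ⌈t⌉₊ : ℝ) ≤ 2 * n ^ 2 :=
    calc (r * ⌈t⌉₊ : ℝ) ≤ t * s ^ 2 / 4 * (2 * t) := by gcongr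
      _ = (t * s) ^ 2 / 2 := by ring
      _ ≤ (2 * n) ^ 2 / 2 := by gcongr
      _ = 2 * n ^ 2 := by ring
  have hpT : (p : ℝ) ≤ ⌈t⌉₊ ^ k := hpt.trans (by gcongr; exact Nat.le_ceil t)
  have hp : 8 * (n * r) < (p : ℝ) :=
    calc 8 * (n * r : ℝ) ≤ 8 * (t * s * (t * s ^ 2 / 4)) := by gcongr
      _ = t ^ 2 * s ^ 3 * 2 := by ring
      _ < t ^ 2 * s ^ 3 * s ^ 2 := by gcongr; nlinarith
      _ = p := by rw [hps]; ring
  have hcard' : 32 * (n : ℝ) ^ 2 ≤ #(dyadicPrimes n) ^ 3 := le_trans (by gcongr) hcard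
  have hmain := sq_mul_card_dyadicPrimes_pow_le hk hkp hn₀ hnr (by exact_mod_cast hrT)
    (by exact_mod_cast hpT) (by exact_mod_cast hp) hne (by exact_mod_cast hcard') hres
  rw [← Nat.cast_le (α := ℝ)] at hmain
  push_cast at hmain
  set K := (#(dyadicPrimes r) : ℝ)
  set L := (#(dyadicPrimes n) : ℝ)
  calc (t * s) ^ 2 * (K * L ^ (4 * k + 1)) ≤ (2 * n) ^ 2 * (K * L ^ (4 * k + 1)) := by gcongr
    _ = 4 * (n ^ 2 * (K * L ^ (4 * k + 1))) := by ring
    _ ≤ 4 * ((32 * n ^ 2) ^ (2 * k) * ((k ^ (2 * k) + (6 * k + 8) ^ 2) * p)) := by gcongr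
    _ ≤ _ := by gcongr

lemma mul_sq_le_pow_three_of_rpow_le {N L ε : ℝ} (hN : 1024 ≤ N) (hε : ε ≤ 1 / 6)
    (hL : N ^ (1 - ε) ≤ L) : 32 * N ^ 2 ≤ L ^ 3 := by
  have hN₀ : 0 < N := by linarith
  calc 32 * N ^ 2 ≤ √N * N ^ 2 := by
        gcongr
        exact Real.le_sqrt_of_sq_le (by linarith)
    _ = N ^ (1 / 2 + 2 : ℝ) := by rw [Real.rpow_add hN₀, Real.sqrt_eq_rpow, Real.rpow_two]
    _ ≤ N ^ ((1 - ε) * (3 : ℕ)) :=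
        Real.rpow_le_rpow_of_exponent_le (by linarith) (by push_cast; linarith)
    _ = (N ^ (1 - ε)) ^ 3 := Real.rpow_mul_natCast hN₀.le _ _
    _ ≤ L ^ 3 := by gcongr

-- For `p = t ^ 2 s ^ 5` the two sides of the moment inequality differ by a factor of order `t ^ 2`:
-- one `t` pays for the losses `x ^ ε` in counting primes, the other for the constants.
lemma exists_isQuadNonRes_of_scales {p k : ℕ} [Fact p.Prime] {s t ε : ℝ}
    (hk : k ≠ 0) (hkp : (4 * k + 4) ^ 2 ≤ p) (hps : p = t ^ 2 * s ^ 5) (hpt : p ≤ t ^ k)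
    (hs : 8 ≤ s) (ht : 16 * (32 ^ (2 * k) * (k ^ (2 * k) + (6 * k + 8) ^ 2)) < t)
    (hε : 0 ≤ ε) (hε' : ε ≤ 1 / 6) (hεt : (t * s) ^ ((4 * k + 3) * ε) ≤ t)
    (hcount : ∀ x, t * s ≤ x → x ^ (1 - ε) ≤ #(dyadicPrimes ⌊x⌋₊)) :
    ∃ b₁ ∈ dyadicPrimes ⌊t * s⌋₊, ∃ b₂ ∈ dyadicPrimes ⌊t * s⌋₊, ∃ b₃ ∈ dyadicPrimes ⌊t * s⌋₊,
      IsQuadNonRes p (b₁ * b₂ + b₃) := by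
  by_contra! hres
  set C : ℝ := k ^ (2 * k) + (6 * k + 8) ^ 2
  have ht' : 1024 ≤ t := by
    have h32 : (1 : ℝ) ≤ 32 ^ (2 * k) := one_le_pow₀ (by norm_num)
    have hC64 : 64 ≤ C := by
      have : (0 : ℝ) ≤ k := k.cast_nonneg
      have : (0 : ℝ) ≤ k ^ (2 * k) := by positivity
      nlinarith
    nlinarith
  have hN : 1024 ≤ t * s := by nlinarith
  have hNcount := hcount (t * s) le_rfl
  have hycount := hcount (t * s ^ 2 / 4) (by nlinarith)
  have hne : (dyadicPrimes ⌊t * s ^ 2 / 4⌋₊).Nonempty := by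
    rw [← Finset.card_pos, ← Nat.cast_pos (α := ℝ)]
    exact (by positivity : 0 < (t * s ^ 2 / 4) ^ (1 - ε)).trans_le hycount
  have hupper := mul_sq_mul_card_dyadicPrimes_pow_le hk hkp hps hpt hs (by linarith) hne
    (mul_sq_le_pow_three_of_rpow_le hN hε' hNcount) hres
  have hlower := mul_pow_le_mul_rpow (m := 4 * k + 1) (by linarith : 1 ≤ t * s) (by positivity)
    (by nlinarith [sq_nonneg s]) hε hycount hNcount
  rw [show ((4 * k + 1 : ℕ) + 2 : ℝ) = 4 * k + 3 by push_cast; ring] at hlower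
  set K := (#(dyadicPrimes ⌊t * s ^ 2 / 4⌋₊) : ℝ)
  set L := (#(dyadicPrimes ⌊t * s⌋₊) : ℝ)
  refine ht.not_ge (le_of_mul_le_mul_left ?_
    (by positivity : 0 < (t * s) ^ (4 * k) * t ^ 3 * (t * s ^ 5) / 4))
  calc (t * s) ^ (4 * k) * t ^ 3 * (t * s ^ 5) / 4 * t
      = (t * s) ^ 2 * (t * s ^ 2 / 4 * (t * s) ^ (4 * k + 1)) * t := by ring
    _ ≤ (t * s) ^ 2 * (K * L ^ (4 * k + 1) * t) * t := by
        gcongr (t * s) ^ 2 * ?_ * t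
        exact hlower.trans (by gcongr)
    _ = (t * s) ^ 2 * (K * L ^ (4 * k + 1)) * t ^ 2 := by ring
    _ ≤ 4 * ((32 * (t * s) ^ 2) ^ (2 * k) * (C * p)) * t ^ 2 := by gcongr
    _ = _ := by
        rw [hps]
        ring

lemma lt_and_le_of_mem_dyadicPrimes_floor {x : ℝ} {q : ℕ} (hx : 0 ≤ x)
    (hq : q ∈ dyadicPrimes ⌊x⌋₊) : x < q ∧ q ≤ 2 * x := by
  obtain ⟨⟨hlt, hle⟩, -⟩ := mem_dyadicPrimes.mp hq
  refine ⟨(Nat.floor_lt hx).mp hlt, ?_⟩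
  calc (q : ℝ) ≤ 2 * ⌊x⌋₊ := by exact_mod_cast hle
    _ ≤ 2 * x := by gcongr; exact Nat.floor_le hx

lemma exists_isQuadNonRes_of_rpow_scales {p k : ℕ} [Fact p.Prime] {τ σ : ℝ} (hk : k ≠ 0)
    (hkp : (4 * k + 4) ^ 2 ≤ p) (hkτ : 1 ≤ τ * k) (hσ : 0 ≤ σ) (hτσ : 2 * τ + 5 * σ = 1)
    (hs : 8 ≤ (p : ℝ) ^ σ)
    (ht : 16 * (32 ^ (2 * k) * (k ^ (2 * k) + (6 * k + 8) ^ 2)) < (p : ℝ) ^ τ)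
    (hcount : ∀ x, (p : ℝ) ^ (τ + σ) ≤ x → x ^ (1 - τ / (4 * k + 3)) ≤ #(dyadicPrimes ⌊x⌋₊)) :
    ∃ b₁ ∈ dyadicPrimes ⌊(p : ℝ) ^ (τ + σ)⌋₊, ∃ b₂ ∈ dyadicPrimes ⌊(p : ℝ) ^ (τ + σ)⌋₊,
      ∃ b₃ ∈ dyadicPrimes ⌊(p : ℝ) ^ (τ + σ)⌋₊, IsQuadNonRes p (b₁ * b₂ + b₃) := by
  have hp₁ : (1 : ℝ) ≤ p := by exact_mod_cast (Fact.out : p.Prime).one_le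
  have hp₀ : (0 : ℝ) < p := by linarith
  have hkR : (1 : ℝ) ≤ k := by exact_mod_cast Nat.one_le_iff_ne_zero.mpr hk
  have hτ : 0 < τ := pos_of_mul_pos_left (by linarith) k.cast_nonneg
  rw [Real.rpow_add hp₀] at hcount ⊢
  refine exists_isQuadNonRes_of_scales (ε := τ / (4 * k + 3)) hk hkp ?_ ?_ hs ht (by positivity)
    ?_ ?_ hcount
  · rw [← Real.rpow_mul_natCast hp₀.le, ← Real.rpow_mul_natCast hp₀.le, ← Real.rpow_add hp₀]
    push_cast
    rw [mul_comm τ, mul_comm σ, hτσ, Real.rpow_one]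
  · rw [← Real.rpow_mul_natCast hp₀.le]
    exact Real.self_le_rpow_of_one_le hp₁ hkτ
  · rw [div_le_iff₀ (by positivity)]
    linarith
  · rw [← Real.rpow_add hp₀, ← Real.rpow_mul hp₀.le, mul_div_cancel₀ _ (by positivity)]
    exact Real.rpow_le_rpow_of_exponent_le hp₁ (by nlinarith)

lemma eventually_exists_isQuadNonRes_dyadicPrimes {θ : ℝ} (hθ : 1 / 5 < θ) (hθ' : θ < 1 / 2) :
    ∀ᶠ p : ℕ in atTop, p.Prime → ∃ b₁ ∈ dyadicPrimes ⌊(p : ℝ) ^ θ⌋₊,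
      ∃ b₂ ∈ dyadicPrimes ⌊(p : ℝ) ^ θ⌋₊, ∃ b₃ ∈ dyadicPrimes ⌊(p : ℝ) ^ θ⌋₊,
        IsQuadNonRes p (b₁ * b₂ + b₃) := by
  obtain ⟨τ, σ, hτ, hσ, hτσ, rfl⟩ :
      ∃ τ σ : ℝ, 0 < τ ∧ 0 < σ ∧ 2 * τ + 5 * σ = 1 ∧ τ + σ = θ :=
    ⟨(5 * θ - 1) / 3, (1 - 2 * θ) / 3, by linarith, by linarith, by ring, by ring⟩
  obtain ⟨k, hk⟩ := exists_nat_ge (1 / τ)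
  have hkτ : 1 ≤ τ * k := (div_le_iff₀' hτ).mp hk
  have hk₀ : k ≠ 0 := by
    rintro rfl
    norm_num at hkτ
  have hε : τ / (4 * k + 3) ≤ 1 / 2 := by
    rw [div_le_iff₀ (by positivity)]
    linarith [k.cast_nonneg (α := ℝ)]
  obtain ⟨x₀, hx₀⟩ := eventually_atTop.mp
    (eventually_rpow_le_card_dyadicPrimes (ε := τ / (4 * k + 3)) (by positivity) hε)
  have hlarge {a : ℝ} (ha : 0 < a) : Tendsto (fun p : ℕ ↦ (p : ℝ) ^ a) atTop atTop :=
    (tendsto_rpow_atTop ha).comp tendsto_natCast_atTop_atTop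
  filter_upwards [eventually_ge_atTop ((4 * k + 4) ^ 2), (hlarge hσ).eventually_ge_atTop 8,
    (hlarge hτ).eventually_gt_atTop (16 * (32 ^ (2 * k) * (k ^ (2 * k) + (6 * k + 8) ^ 2))),
    (hlarge (add_pos hτ hσ)).eventually_ge_atTop x₀] with p hkp hs ht hx hprime
  have := Fact.mk hprime
  exact exists_isQuadNonRes_of_rpow_scales hk₀ hkp hkτ hσ.le hτσ hs ht fun x hx' ↦
    hx₀ x (hx.trans hx')

end Dyadic

theorem primes_product_plus_prime_nonresidue_general (θ : ℝ) (hθ : 1 / 5 < θ) (hθ' : θ < 1 / 2) :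
    ∃ p₀ : ℕ, ∀ p : ℕ, p.Prime → p₀ ≤ p →
      ∃ p₁ p₂ p₃ : ℕ, p₁.Prime ∧ p₂.Prime ∧ p₃.Prime ∧
        (p : ℝ) ^ θ < p₁ ∧ p₁ ≤ 2 * (p : ℝ) ^ θ ∧
        (p : ℝ) ^ θ < p₂ ∧ p₂ ≤ 2 * (p : ℝ) ^ θ ∧
        (p : ℝ) ^ θ < p₃ ∧ p₃ ≤ 2 * (p : ℝ) ^ θ ∧
        IsQuadNonRes p (p₁ * p₂ + p₃) := by
  obtain ⟨p₀, hp₀⟩ :=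
    Filter.eventually_atTop.mp (eventually_exists_isQuadNonRes_dyadicPrimes hθ hθ')
  refine ⟨p₀, fun p hp hpp ↦ ?_⟩
  obtain ⟨p₁, h₁, p₂, h₂, p₃, h₃, hres⟩ := hp₀ p hpp hp
  have hprime {q : ℕ} (hq : q ∈ dyadicPrimes ⌊(p : ℝ) ^ θ⌋₊) : q.Prime := (mem_dyadicPrimes.mp hq).2
  have hrange {q : ℕ} (hq : q ∈ dyadicPrimes ⌊(p : ℝ) ^ θ⌋₊) :=
    lt_and_le_of_mem_dyadicPrimes_floor (by positivity) hq
  exact ⟨p₁, p₂, p₃, hprime h₁, hprime h₂, hprime h₃, (hrange h₁).1, (hrange h₁).2,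
    (hrange h₂).1, (hrange h₂).2, (hrange h₃).1, (hrange h₃).2, hres⟩

/-- Corollary 2.12: for large primes `p` there are primes
`p₁, p₂, p₃ ∼ p^{1/5+η}` with `p₁·p₂ + p₃` a quadratic non-residue mod `p`. -/
theorem primes_product_plus_prime_nonresidue (η : ℝ) (hη : 0 < η) (hη' : η < 1 / 20) :
    ∃ p₀ : ℕ, ∀ (p : ℕ), p.Prime → p₀ ≤ p →
      ∃ p₁ p₂ p₃ : ℕ, p₁.Prime ∧ p₂.Prime ∧ p₃.Prime ∧
        (p : ℝ) ^ ((1 : ℝ) / 5 + η) < (p₁ : ℝ) ∧ (p₁ : ℝ) ≤ 2 * (p : ℝ) ^ ((1 : ℝ) / 5 + η) ∧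
        (p : ℝ) ^ ((1 : ℝ) / 5 + η) < (p₂ : ℝ) ∧ (p₂ : ℝ) ≤ 2 * (p : ℝ) ^ ((1 : ℝ) / 5 + η) ∧
        (p : ℝ) ^ ((1 : ℝ) / 5 + η) < (p₃ : ℝ) ∧ (p₃ : ℝ) ≤ 2 * (p : ℝ) ^ ((1 : ℝ) / 5 + η) ∧
        IsQuadNonRes p ((p₁ : ℤ) * p₂ + p₃) :=
  primes_product_plus_prime_nonresidue_general (1 / 5 + η) (by linarith) (by linarith)
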